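/- arXiv:math/0012217 — 3 statements merged into one kernel-verified Lean document; each statement's English description precedes it below -/
import Mathlib

section
/- For every n ≥ 7, the inclusion A_n ↪ A_{n+1}, given by extending each even permutation of {1, …, n} to a permutation of {1, …, n+1} fixing the point n+1, is a localization. -/
/-- A group homomorphism `φ : H →* G` is a localization if precomposition with `φ`
induces a bijection `Hom(G,G) ≃ Hom(H,G)`. -/
def IsLocalizationHom {H G : Type*} [Group H] [Group G] (φ : H →* G) : Prop :=
  Function.Bijective fun ψ : G →* G => ψ.comp φ

/-!
A nontrivial homomorphism out of an alternating group of degree at least 5 is injective, by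
simplicity. The key point is that for `|α| = |β| ≥ 7` every injective homomorphism `A_α → S_β` is
conjugation by a bijection `α ≃ β`:

* Such a homomorphism preserves 3-cycles. Indeed, if `s` is a 3-cycle then every commutator `⁅s, g⁆`
  is a product of two 3-cycles, hence has order 1, 2, 3 or 5; and if `s` is any other element of
  order 3, then some commutator with an even permutation has order 4.
* Fix `a ≠ b`. The 3-cycles `(a b c)` have pairwise products of order 2, hence so do their images,
  and this forces the images to be of the form `(p q c')` for fixed `p ≠ q`. The bijection is then
  `a ↦ p`, `b ↦ q`, `c ↦ c'`, because the cycles `(a b c)` generate `A_α`.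

Applied to the action of `A_{n+1}` on the cosets of a subgroup of index `n + 1`, this shows that
the image of any embedding `A_n → A_{n+1}` is a point stabilizer. Hence all these embeddings are
conjugate in `S_{n+1}`, which gives the extension of a homomorphism from `A_n` to `A_{n+1}`.
The extension is unique since endomorphisms of `A_{n+1}` are trivial or conjugations, and the
centralizer of `A_n` in `S_{n+1}` is trivial.
-/

open Equiv Equiv.Perm
open scoped commutatorElement

lemma exists_notMem_of_card_lt {α : Type*} (s : Finset α) (hs : s.card < Nat.card α) :
    ∃ x, x ∉ s := by
  by_contra! h
  have coe_eq_univ : (s : Set α) = Set.univ := Set.eq_univ_of_forall h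
  rw [← Set.ncard_coe_finset, coe_eq_univ, Set.ncard_univ] at hs
  exact hs.false

section Embedding

variable {α β : Type*} [Fintype α] [DecidableEq α] [Fintype β] [DecidableEq β]

lemma sign_viaEmbeddingHom (ι : α ↪ β) (σ : Perm α) : sign (viaEmbeddingHom ι σ) = sign σ := by
  classical
  rw [viaEmbeddingHom_apply, viaEmbedding]
  convert sign_extendDomain σ (ofInjective ι.1 ι.2)

/-- The inclusion `A_α ↪ A_β` of alternating groups induced by an embedding `ι : α ↪ β`: an even
permutation is transported to the range of `ι` and fixes the other points of `β`. -/
noncomputable def alternatingEmbedding (ι : α ↪ β) : alternatingGroup α →* alternatingGroup β :=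
  ((viaEmbeddingHom ι).comp (alternatingGroup α).subtype).codRestrict _ fun σ ↦ by
    rw [mem_alternatingGroup]
    exact (sign_viaEmbeddingHom ι σ).trans σ.2

lemma coe_alternatingEmbedding (ι : α ↪ β) (σ : alternatingGroup α) :
    (alternatingEmbedding ι σ : Perm β) = viaEmbeddingHom ι σ := rfl

lemma alternatingEmbedding_injective (ι : α ↪ β) :
    Function.Injective (alternatingEmbedding ι) :=
  fun _ _ h ↦ Subtype.ext (viaEmbeddingHom_injective ι (congrArg Subtype.val h))

end Embedding

lemma viaEmbeddingHom_trans_perm {α β : Type*} (σ : Perm α) (ι : α ↪ β) (e : Perm β) :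
    viaEmbeddingHom (ι.trans e.toEmbedding) σ = e * viaEmbeddingHom ι σ * e⁻¹ := by
  rw [eq_mul_inv_iff_mul_eq]
  ext x
  by_cases hx : x ∈ Set.range ι
  · obtain ⟨a, rfl⟩ := hx
    simpa [viaEmbeddingHom_apply, viaEmbedding_apply] using
      viaEmbedding_apply σ (ι.trans e.toEmbedding) a
  · have hex : e x ∉ Set.range (ι.trans e.toEmbedding) := by simpa using hx
    simp only [viaEmbeddingHom_apply, Perm.mul_apply, viaEmbedding_apply_of_notMem _ _ _ hx,
      viaEmbedding_apply_of_notMem _ _ _ hex]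

section ThreeCycle

lemma apply_apply_apply_of_pow_three {α : Type*} {s : Perm α} (hs : s ^ 3 = 1) (x : α) :
    s (s (s x)) = x := by
  simpa [pow_succ] using DFunLike.congr_fun hs x

variable {α : Type*} [Fintype α] [DecidableEq α] {s t : Perm α}

lemma pow_thirty_eq_one_of_card_support_le_five (hs : s.support.card ≤ 5) (hsign : sign s = 1) :
    s ^ 30 = 1 := by
  rw [← orderOf_dvd_iff_pow_eq_one, ← lcm_cycleType, Multiset.lcm_dvd]
  intro k hk
  obtain ⟨m, hm⟩ := Multiset.exists_cons_of_mem hk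
  have two_le : ∀ j ∈ k ::ₘ m, 2 ≤ j := fun j hj ↦ two_le_of_mem_cycleType (hm ▸ hj)
  have hsum : k + m.sum ≤ 5 := by simpa [← sum_cycleType, hm] using hs
  have hk2 : 2 ≤ k := two_le k (Multiset.mem_cons_self k m)
  have hcard : m.card * 2 ≤ m.sum := by
    simpa using Multiset.card_nsmul_le_sum fun j hj ↦ two_le j (Multiset.mem_cons_of_mem hj)
  have k_ne_four : k ≠ 4 := by
    rintro rfl
    obtain rfl : m = 0 := Multiset.card_eq_zero.1 (by omega)
    rw [sign_of_cycleType, hm] at hsign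
    revert hsign
    decide
  have hk5 : k ≤ 5 := by omega
  interval_cases k <;> omega

lemma pow_three_eq_one_of_isThreeCycle (hs : s.IsThreeCycle) : s ^ 3 = 1 :=
  hs.orderOf ▸ pow_orderOf_eq_one s

lemma mul_pow_thirty_eq_one_of_isThreeCycle (hs : s.IsThreeCycle) (ht : t.IsThreeCycle) :
    (s * t) ^ 30 = 1 := by
  by_cases hst : Perm.Disjoint s t
  · rw [hst.commute.mul_pow, show 30 = 3 * 10 from rfl, pow_mul, pow_mul,
      pow_three_eq_one_of_isThreeCycle hs, pow_three_eq_one_of_isThreeCycle ht, one_pow, one_mul]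
  · refine pow_thirty_eq_one_of_card_support_le_five ?_ (by simp [hs.sign, ht.sign])
    have inter_pos : 0 < (s.support ∩ t.support).card := by
      rwa [Finset.card_pos, ← Finset.not_disjoint_iff_nonempty_inter,
        ← disjoint_iff_disjoint_support]
    have union_add_inter := Finset.card_union_add_card_inter s.support t.support
    rw [hs.card_support, ht.card_support] at union_add_inter
    calc (s * t).support.card ≤ (s.support ∪ t.support).card :=
          Finset.card_le_card (support_mul_le s t)
      _ ≤ 5 := by omega

lemma commutator_pow_thirty_eq_one_of_isThreeCycle (hs : s.IsThreeCycle) (g : Perm α) :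
    ⁅s, g⁆ ^ 30 = 1 := by
  have conj_isThreeCycle : (g * s⁻¹ * g⁻¹).IsThreeCycle := by
    rw [IsThreeCycle, cycleType_conj, hs.inv.cycleType]
  simpa [commutatorElement_def, mul_assoc] using
    mul_pow_thirty_eq_one_of_isThreeCycle hs conj_isThreeCycle

lemma commutator_pow_eq_one_of_semiconj {κ : Type*} [Fintype κ] [DecidableEq κ] (ι : κ ↪ α)
    {s₀ g₀ : Perm κ} (hs : Function.Semiconj ι s₀ s) (hg₀ : g₀ ∈ alternatingGroup κ) {m : ℕ}
    (h : ∀ g ∈ alternatingGroup α, ⁅s, g⁆ ^ m = 1) : ⁅s₀, g₀⁆ ^ m = 1 := by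
  set g := viaEmbeddingHom ι g₀
  have hg : Function.Semiconj ι g₀ g := fun i ↦ (viaEmbedding_apply g₀ ι i).symm
  have inv_semiconj {p₀ : Perm κ} {p : Perm α} (hp : Function.Semiconj ι p₀ p) :
      Function.Semiconj ι ⇑p₀⁻¹ ⇑p⁻¹ :=
    hp.inverses_right p₀.right_inv p.left_inv
  have hcomm : Function.Semiconj ι ⇑⁅s₀, g₀⁆ ⇑⁅s, g⁆ :=
    ((hs.comp_right hg).comp_right (inv_semiconj hs)).comp_right (inv_semiconj hg)
  have hpow : ⁅s, g⁆ ^ m = 1 := h g (by rwa [mem_alternatingGroup, sign_viaEmbeddingHom])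
  ext i
  apply ι.injective
  rw [coe_pow, (hcomm.iterate_right m).eq, ← coe_pow, hpow]
  rfl

lemma isThreeCycle_of_pow_three_eq_one {a : α} (hs : s ^ 3 = 1) (ha : s a ≠ a)
    (h : ∀ b, s b ≠ b → b = a ∨ b = s a ∨ b = s (s a)) : s.IsThreeCycle := by
  have hs3 := apply_apply_apply_of_pow_three hs
  have support_eq : s.support = {a, s a, s (s a)} := by
    ext x
    simp only [mem_support, Finset.mem_insert, Finset.mem_singleton]
    grind
  rw [← card_support_eq_three_iff, support_eq, Finset.card_eq_three]
  exact ⟨a, s a, s (s a), by grind, by grind, by grind, rfl⟩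

set_option maxRecDepth 20000 in
lemma not_forall_commutator_pow_thirty_of_semiconj_seven (ι : Fin 7 ↪ α)
    (hs : Function.Semiconj ι (c[0, 1, 2] * c[3, 4, 5] : Perm (Fin 7)) s) :
    ¬ ∀ g ∈ alternatingGroup α, ⁅s, g⁆ ^ 30 = 1 := fun h ↦ by
  -- The commutator of `(0 1 2)(3 4 5)` with `(2 3)(5 6)` is `(0 4)(2 6 5 3)`, of order 4.
  have commutator_pow := commutator_pow_eq_one_of_semiconj ι hs (g₀ := swap 2 3 * swap 5 6)
    (mem_alternatingGroup.2 (by decide)) h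
  exact absurd (DFunLike.congr_fun commutator_pow 2) (by decide)

set_option maxRecDepth 20000 in
lemma not_forall_commutator_pow_thirty_of_semiconj_nine (ι : Fin 9 ↪ α)
    (hs : Function.Semiconj ι (c[0, 1, 2] * c[3, 4, 5] * c[6, 7, 8] : Perm (Fin 9)) s) :
    ¬ ∀ g ∈ alternatingGroup α, ⁅s, g⁆ ^ 30 = 1 := fun h ↦ by
  -- The commutator of `(0 1 2)(3 4 5)(6 7 8)` with `(2 3 6 7 4)` is `(0 4 8 5)(2 7 6 3)`.
  have commutator_pow := commutator_pow_eq_one_of_semiconj ι hs (g₀ := c[2, 3, 6, 7, 4])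
    (mem_alternatingGroup.2 (by decide)) h
  exact absurd (DFunLike.congr_fun commutator_pow 2) (by decide)

lemma isThreeCycle_of_commutator_pow_thirty (hα : 7 ≤ Nat.card α) (hs : s ^ 3 = 1) (hs1 : s ≠ 1)
    (h : ∀ g ∈ alternatingGroup α, ⁅s, g⁆ ^ 30 = 1) : s.IsThreeCycle := by
  have hs3 := apply_apply_apply_of_pow_three hs
  obtain ⟨a, ha⟩ : ∃ a, s a ≠ a := DFunLike.ne_iff.1 hs1
  refine isThreeCycle_of_pow_three_eq_one hs ha ?_
  by_contra! ⟨b, hb, hba, hbsa, hbssa⟩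
  obtain ⟨c, hc⟩ := exists_notMem_of_card_lt {a, s a, s (s a), b, s b, s (s b)}
    (Finset.card_le_six.trans_lt hα)
  simp only [Finset.mem_insert, Finset.mem_singleton, not_or] at hc
  by_cases hsc : s c = c
  · have nodup_seven : [a, s a, s (s a), b, s b, s (s b), c].Nodup := by
      simp only [List.nodup_cons, List.mem_cons, List.not_mem_nil, or_false, not_or]
      grind
    refine not_forall_commutator_pow_thirty_of_semiconj_seven
      ⟨_, List.nodup_iff_injective_get.1 nodup_seven⟩ (fun i ↦ ?_) h
    fin_cases i <;> first | exact rfl | exact (hs3 _).symm | exact hsc.symm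
  · have nodup_nine : [a, s a, s (s a), b, s b, s (s b), c, s c, s (s c)].Nodup := by
      simp only [List.nodup_cons, List.mem_cons, List.not_mem_nil, or_false, not_or]
      and_intros <;> grind
    refine not_forall_commutator_pow_thirty_of_semiconj_nine
      ⟨_, List.nodup_iff_injective_get.1 nodup_nine⟩ (fun i ↦ ?_) h
    fin_cases i <;> first | exact rfl | exact (hs3 _).symm

end ThreeCycle

section CommonArc

variable {α : Type*}

/-- Two permutations have a common arc `p ↦ q` if both send some point `p` to the same `q ≠ p`. -/
def HaveCommonArc (s t : Perm α) : Prop := ∃ p, s p ≠ p ∧ t p = s p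

variable [Fintype α] [DecidableEq α] {s t u : Perm α}

lemma eq_or_eq_apply_of_isThreeCycle (hs : s.IsThreeCycle) {x y : α} (hx : s x ≠ x)
    (hy : s y ≠ y) : y = x ∨ y = s x ∨ y = s (s x) := by
  rw [← mem_support] at hx hy
  simpa [hs.support_eq_iff_mem_support.2 hx] using hy

lemma haveCommonArc_of_mul_sq_eq_one (hs : s.IsThreeCycle) (ht : t.IsThreeCycle)
    (hst : (s * t) ^ 2 = 1) (hst1 : s * t ≠ 1) : HaveCommonArc s t := by
  have hs3 := apply_apply_apply_of_pow_three (pow_three_eq_one_of_isThreeCycle hs)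
  have ht3 := apply_apply_apply_of_pow_three (pow_three_eq_one_of_isThreeCycle ht)
  have arc_of_fixed {y z : α} (hyz : y ≠ z) (hy : s (t y) = z) (hz : s (t z) = y)
      (hfix : t y = y ∨ s z = z) : HaveCommonArc s t := by
    obtain hty | hsz := hfix
    · exact ⟨z, by grind, by grind⟩
    · exact ⟨t z, by grind, by grind⟩
  obtain ⟨y, hy⟩ : ∃ y, s (t y) ≠ y := DFunLike.ne_iff.1 hst1
  obtain ⟨z, hyz⟩ : ∃ z, s (t y) = z := ⟨_, rfl⟩
  have hzy : s (t z) = y := by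
    simpa [pow_two, hyz] using DFunLike.congr_fun hst y
  by_contra no_arc
  have hy_moved : t y ≠ y ∧ s z ≠ z := by grind
  have hz_moved : t z ≠ z ∧ s y ≠ y := by grind
  have hs_arc := eq_or_eq_apply_of_isThreeCycle hs hz_moved.2 hy_moved.2
  unfold HaveCommonArc at no_arc
  grind

lemma apply_eq_of_haveCommonArc (hs : s.IsThreeCycle) (ht : t.IsThreeCycle)
    (hu : u.IsThreeCycle) (hst : s ≠ t) {p : α} (hp : s p ≠ p) (htp : t p = s p)
    (hus : HaveCommonArc u s) (hut : HaveCommonArc u t) : u p = s p := by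
  have hs3 := apply_apply_apply_of_pow_three (pow_three_eq_one_of_isThreeCycle hs) p
  have ht3 := apply_apply_apply_of_pow_three (pow_three_eq_one_of_isThreeCycle ht) p
  obtain ⟨x, hux, hsx⟩ := hus
  obtain ⟨y, huy, hty⟩ := hut
  have hu3 := apply_apply_apply_of_pow_three (pow_three_eq_one_of_isThreeCycle hu) x
  have third_ne : s (s p) ≠ t (t p) := fun h ↦ hst <| by
    rw [hs.eq_swap_mul_swap_iff_mem_support.2 (mem_support.2 hp),
      ht.eq_swap_mul_swap_iff_mem_support.2 (mem_support.2 (htp ▸ hp)), ← h, htp]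
  have hx := eq_or_eq_apply_of_isThreeCycle hs hp (hsx ▸ hux)
  have hy := eq_or_eq_apply_of_isThreeCycle ht (htp ▸ hp) (hty ▸ huy)
  have hxy := eq_or_eq_apply_of_isThreeCycle hu hux huy
  grind

lemma exists_forall_apply_eq_of_pairwise_haveCommonArc {κ : Type*} [Nontrivial κ]
    {T : κ → Perm α} (hT : ∀ i, (T i).IsThreeCycle) (hinj : Function.Injective T)
    (harc : Pairwise fun i j ↦ HaveCommonArc (T i) (T j)) :
    ∃ p q, p ≠ q ∧ ∀ i, T i p = q := by
  obtain ⟨j, k, hjk⟩ := exists_pair_ne κ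
  obtain ⟨p, hjp, hkp⟩ := harc hjk
  refine ⟨p, T j p, hjp.symm, fun i ↦ ?_⟩
  obtain rfl | hij := eq_or_ne i j
  · rfl
  obtain rfl | hik := eq_or_ne i k
  · exact hkp
  exact apply_eq_of_haveCommonArc (hT j) (hT k) (hT i) (hinj.ne hjk) hjp hkp (harc hij) (harc hik)

end CommonArc

section Generation

variable {α : Type*} [Fintype α] [DecidableEq α] {K : Subgroup (Perm α)}

lemma alternatingGroup_le_of_forall_mul_swap_mem (τ : Perm α)
    (h : ∀ x y, x ≠ y → τ * swap x y ∈ K) : alternatingGroup α ≤ K := by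
  rw [← closure_three_cycles_eq_alternating, Subgroup.closure_le]
  intro g hg
  obtain ⟨x, hx⟩ : ∃ x, g x ≠ x := DFunLike.ne_iff.1 hg.ne_one
  rw [hg.eq_swap_mul_swap_iff_mem_support.2 (mem_support.2 hx)]
  simpa [mul_assoc] using
    mul_mem (inv_mem (h x (g x) hx.symm)) (h (g x) (g (g x)) (g.injective.ne hx.symm))

lemma alternatingGroup_le_of_forall_swap_mul_swap_mem {a b : α} (hab : a ≠ b)
    (h : ∀ c, c ≠ a → c ≠ b → swap a b * swap b c ∈ K) : alternatingGroup α ≤ K := by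
  have mem_of_ne (x : α) (hx : x ≠ a) : swap a b * swap a x ∈ K := by
    obtain rfl | hxb := eq_or_ne x b
    · simp [one_mem]
    have sq_eq : swap a b * swap a x = (swap a b * swap b x) ^ 2 := by
      ext y
      simp only [pow_two, Perm.mul_apply, swap_apply_def]
      grind
    exact sq_eq ▸ pow_mem (h x hx hxb) 2
  refine alternatingGroup_le_of_forall_mul_swap_mem (swap a b) fun x y hxy ↦ ?_
  obtain rfl | hx := eq_or_ne x a
  · exact mem_of_ne y hxy.symm
  obtain rfl | hy := eq_or_ne y a
  · exact swap_comm x y ▸ mem_of_ne x hx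
  have swap_eq : swap x y = swap a x * swap a y * swap a x := by
    rw [swap_comm a y, swap_mul_swap_mul_swap hy hxy.symm]
  have mem := mul_mem (mul_mem (mem_of_ne x hx) (inv_mem (mem_of_ne y hy))) (mem_of_ne x hx)
  simpa [swap_eq, mul_assoc] using mem

end Generation

section ThreeCycleThrough

variable {α : Type*} [Fintype α] [DecidableEq α] {a b : α}

/-- The 3-cycle `(a b c)`, as an even permutation, where `a ≠ b` are fixed and `c` varies among the
other points. -/
def threeCycleThrough (hab : a ≠ b) (c : {c // c ≠ a ∧ c ≠ b}) : alternatingGroup α :=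
  ⟨swap a b * swap b c, mul_mem_alternatingGroup_of_isSwap ⟨a, b, hab, rfl⟩ ⟨b, c, c.2.2.symm, rfl⟩⟩

variable (hab : a ≠ b)

lemma isThreeCycle_threeCycleThrough (c : {c // c ≠ a ∧ c ≠ b}) :
    (threeCycleThrough hab c : Perm α).IsThreeCycle := by
  simpa [threeCycleThrough, swap_comm a b] using
    isThreeCycle_swap_mul_swap_same hab.symm c.2.2.symm c.2.1.symm

lemma threeCycleThrough_injective : Function.Injective (threeCycleThrough hab) := fun c d h ↦ by
  simpa [threeCycleThrough, Subtype.ext_iff] using DFunLike.congr_fun (congrArg Subtype.val h) b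

-- `(a b c)(a b d) = (a c)(b d)`.
lemma threeCycleThrough_mul_sq {c d : {c // c ≠ a ∧ c ≠ b}} (hcd : c ≠ d) :
    (threeCycleThrough hab c * threeCycleThrough hab d) ^ 2 = 1 := by
  obtain ⟨c, hca, hcb⟩ := c
  obtain ⟨d, hda, hdb⟩ := d
  rw [Ne, Subtype.mk.injEq] at hcd
  ext x
  simp only [threeCycleThrough, pow_two, Subgroup.coe_mul, Perm.mul_apply, swap_apply_def,
    Subgroup.coe_one, Perm.one_apply]
  grind

lemma threeCycleThrough_mul_ne_one (c d : {c // c ≠ a ∧ c ≠ b}) :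
    threeCycleThrough hab c * threeCycleThrough hab d ≠ 1 := fun h ↦ by
  have map_a : swap a b c = a := by
    simpa [threeCycleThrough, swap_apply_of_ne_of_ne hab d.2.1.symm] using
      DFunLike.congr_fun (congrArg Subtype.val h) a
  exact c.2.1 (swap_apply_of_ne_of_ne c.2.1 c.2.2 ▸ map_a)

end ThreeCycleThrough

section InjectiveHom

lemma exists_embedding_extending_off_pair {α β : Type*} {a b : α} (hab : a ≠ b) {p q : β}
    (hpq : p ≠ q) {F : {c // c ≠ a ∧ c ≠ b} → β} (hF : Function.Injective F)
    (hFp : ∀ c, F c ≠ p) (hFq : ∀ c, F c ≠ q) :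
    ∃ e : α ↪ β, e a = p ∧ e b = q ∧ ∀ c : {c // c ≠ a ∧ c ≠ b}, e c = F c := by
  classical
  let e (x : α) : β := if hx : x ≠ a ∧ x ≠ b then F ⟨x, hx⟩ else if x = a then p else q
  have e_injective : Function.Injective e := fun x y hxy ↦ by
    simp only [e] at hxy
    grind [Function.Injective]
  exact ⟨⟨e, e_injective⟩, by simp [e], by simp [e, hab.symm], fun c ↦ dif_pos c.2⟩

variable {α β : Type*} [Fintype α] [DecidableEq α]

lemma eq_permCongr_of_forall_threeCycleThrough {a b : α} (hab : a ≠ b)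
    {φ : alternatingGroup α →* Perm β} {e : α ≃ β}
    (h : ∀ c, φ (threeCycleThrough hab c) = e.permCongr (threeCycleThrough hab c))
    (g : alternatingGroup α) : φ g = e.permCongr g := by
  let conj : alternatingGroup α →* Perm β :=
    e.permCongrHom.toMonoidHom.comp (alternatingGroup α).subtype
  have le_map : alternatingGroup α ≤ (φ.eqLocus conj).map (alternatingGroup α).subtype :=
    alternatingGroup_le_of_forall_swap_mul_swap_mem hab fun c hca hcb ↦
      ⟨threeCycleThrough hab ⟨c, hca, hcb⟩, h _, rfl⟩
  obtain ⟨g', hg', hgg'⟩ := le_map g.2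
  obtain rfl : g' = g := Subtype.ext hgg'
  exact hg'

variable [Fintype β] [DecidableEq β] {φ : alternatingGroup α →* Perm β}

lemma exists_forall_apply_threeCycleThrough_eq (hα : 4 ≤ Nat.card α) (hφ : Function.Injective φ)
    (h3 : ∀ g : alternatingGroup α, (g : Perm α).IsThreeCycle → (φ g).IsThreeCycle)
    {a b : α} (hab : a ≠ b) : ∃ p q, p ≠ q ∧ ∀ c, φ (threeCycleThrough hab c) p = q := by
  have : Nontrivial {c // c ≠ a ∧ c ≠ b} := by
    obtain ⟨c, hc⟩ := exists_notMem_of_card_lt {a, b} (Finset.card_le_two.trans_lt (by omega))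
    obtain ⟨d, hd⟩ := exists_notMem_of_card_lt {a, b, c} (Finset.card_le_three.trans_lt hα)
    simp only [Finset.mem_insert, Finset.mem_singleton, not_or] at hc hd
    exact ⟨⟨c, hc⟩, ⟨d, hd.1, hd.2.1⟩, fun h ↦ hd.2.2 (congrArg Subtype.val h).symm⟩
  refine exists_forall_apply_eq_of_pairwise_haveCommonArc
    (fun c ↦ h3 _ (isThreeCycle_threeCycleThrough hab c))
    (hφ.comp (threeCycleThrough_injective hab)) fun c d hcd ↦ ?_
  refine haveCommonArc_of_mul_sq_eq_one (h3 _ (isThreeCycle_threeCycleThrough hab c))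
    (h3 _ (isThreeCycle_threeCycleThrough hab d)) ?_ ?_
  · rw [← map_mul, ← map_pow, threeCycleThrough_mul_sq hab hcd, map_one]
  · rw [← map_mul, ← map_one φ]
    exact hφ.ne (threeCycleThrough_mul_ne_one hab c d)

lemma exists_eq_permCongr_of_map_isThreeCycle (hα : 4 ≤ Nat.card α) (hαβ : Nat.card α = Nat.card β)
    (hφ : Function.Injective φ)
    (h3 : ∀ g : alternatingGroup α, (g : Perm α).IsThreeCycle → (φ g).IsThreeCycle) :
    ∃ e : α ≃ β, ∀ g, φ g = e.permCongr g := by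
  have : Nontrivial α := Finite.one_lt_card_iff_nontrivial.1 (by omega)
  obtain ⟨a, b, hab⟩ := exists_pair_ne α
  obtain ⟨p, q, hpq, map_p⟩ := exists_forall_apply_threeCycleThrough_eq hα hφ h3 hab
  let T (c : {c // c ≠ a ∧ c ≠ b}) : Perm β := φ (threeCycleThrough hab c)
  have hT3 (c) : (T c).IsThreeCycle := h3 _ (isThreeCycle_threeCycleThrough hab c)
  have T_eq (c) : T c = swap p q * swap q (T c q) := by
    have := (hT3 c).eq_swap_mul_swap_iff_mem_support.2
      (mem_support.2 ((map_p c).trans_ne hpq.symm))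
    rwa [map_p c] at this
  have T_cube (c) : T c (T c q) = p := by
    rw [← map_p c]
    exact apply_apply_apply_of_pow_three (pow_three_eq_one_of_isThreeCycle (hT3 c)) p
  obtain ⟨e, ea, eb, ec⟩ := exists_embedding_extending_off_pair hab hpq (F := fun c ↦ T c q)
    (fun c d (hcd : T c q = T d q) ↦ threeCycleThrough_injective hab <| hφ <|
      show T c = T d by rw [T_eq c, T_eq d, hcd])
    (fun c hc ↦ hpq <| by rw [← T_cube c, hc, map_p])
    (fun c hc ↦ hpq <| by rw [← T_cube c, hc, hc])
  let e' : α ≃ β := .ofBijective e ((Nat.bijective_iff_injective_and_card e).2 ⟨e.injective, hαβ⟩)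
  refine ⟨e', eq_permCongr_of_forall_threeCycleThrough hab fun c ↦ ?_⟩
  calc φ (threeCycleThrough hab c) = swap (e' a) (e' b) * swap (e' b) (e' c) := by
        simp only [e', ofBijective_apply, ea, eb, ec]; exact T_eq c
    _ = e'.permCongr (threeCycleThrough hab c) := by
        rw [← symm_trans_swap_trans, ← symm_trans_swap_trans]
        exact (map_mul e'.permCongrHom (swap a b) (swap b c)).symm

lemma map_mem_alternatingGroup (hα : 5 ≤ Nat.card α) (φ : alternatingGroup α →* Perm β)
    (g : alternatingGroup α) : φ g ∈ alternatingGroup β := by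
  have le_ker := Abelianization.commutator_subset_ker (sign.comp φ)
  rw [commutator_alternatingGroup_eq_top hα] at le_ker
  exact le_ker (Subgroup.mem_top g)

lemma range_eq_alternatingGroup_of_injective (hα : 5 ≤ Nat.card α) (hαβ : Nat.card α = Nat.card β)
    (hφ : Function.Injective φ) : φ.range = alternatingGroup β := by
  have : Nontrivial α := Finite.one_lt_card_iff_nontrivial.1 (by omega)
  have : Nontrivial β := Finite.one_lt_card_iff_nontrivial.1 (by omega)
  refine Subgroup.eq_of_le_of_card_ge ?_ ?_
  · rintro _ ⟨g, rfl⟩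
    exact map_mem_alternatingGroup hα φ g
  · rw [← Nat.card_congr (MonoidHom.ofInjective hφ).toEquiv, nat_card_alternatingGroup,
      nat_card_alternatingGroup, hαβ]

lemma isThreeCycle_map_of_injective (hα : 7 ≤ Nat.card α) (hαβ : Nat.card α = Nat.card β)
    (hφ : Function.Injective φ) {g : alternatingGroup α} (hg : (g : Perm α).IsThreeCycle) :
    (φ g).IsThreeCycle := by
  refine isThreeCycle_of_commutator_pow_thirty (hαβ ▸ hα) ?_ ?_ fun k hk ↦ ?_
  · rw [← map_pow, show g ^ 3 = 1 from Subtype.ext (pow_three_eq_one_of_isThreeCycle hg), map_one]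
  · rw [Ne, map_eq_one_iff φ hφ]
    rintro rfl
    exact hg.ne_one rfl
  · rw [← range_eq_alternatingGroup_of_injective (by omega) hαβ hφ] at hk
    obtain ⟨k, rfl⟩ := hk
    have commutator_pow : ⁅g, k⁆ ^ 30 = 1 :=
      Subtype.ext (commutator_pow_thirty_eq_one_of_isThreeCycle hg k)
    rw [← map_commutatorElement, ← map_pow, commutator_pow, map_one]

end InjectiveHom

lemma exists_eq_permCongr_of_injective {α β : Type*} [Fintype α] [DecidableEq α] [Finite β]
    (hα : 7 ≤ Nat.card α) (hαβ : Nat.card α = Nat.card β) {φ : alternatingGroup α →* Perm β}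
    (hφ : Function.Injective φ) : ∃ e : α ≃ β, ∀ g, φ g = e.permCongr g := by
  classical
  have := Fintype.ofFinite β
  exact exists_eq_permCongr_of_map_isThreeCycle (by omega) hαβ hφ fun g ↦
    isThreeCycle_map_of_injective hα hαβ hφ

section Simple

variable {α G : Type*} [Fintype α] [DecidableEq α] [Group G]

lemma injective_or_eq_one_of_alternatingGroup (hα : 5 ≤ Nat.card α) (φ : alternatingGroup α →* G) :
    Function.Injective φ ∨ φ = 1 := by
  have := alternatingGroup.isSimpleGroup hα
  rcases IsSimpleGroup.eq_bot_or_eq_top_of_normal φ.ker inferInstance with h | h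
  · exact .inl ((MonoidHom.ker_eq_bot_iff φ).1 h)
  · exact .inr (MonoidHom.ker_eq_top_iff.1 h)

lemma eq_one_of_comp_eq_one {H : Type*} [Group H] [Nontrivial H] (hα : 5 ≤ Nat.card α)
    {f : H →* alternatingGroup α} (hf : Function.Injective f) {ψ : alternatingGroup α →* G}
    (h : ψ.comp f = 1) : ψ = 1 := by
  refine (injective_or_eq_one_of_alternatingGroup hα ψ).resolve_left fun hψ ↦ ?_
  obtain ⟨x, hx⟩ := exists_ne (1 : H)
  exact hx ((map_eq_one_iff (ψ.comp f) (hψ.comp hf)).1 (DFunLike.congr_fun h x))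

end Simple

section PointStabilizer

variable {β : Type*} [Fintype β] [DecidableEq β]

lemma exists_forall_apply_eq_self_of_index_eq (hβ : 7 ≤ Nat.card β)
    {H : Subgroup (alternatingGroup β)} (hH : H.index = Nat.card β) :
    ∃ x, ∀ g ∈ H, (g : Perm β) x = x := by
  let θ := MulAction.toPermHom (alternatingGroup β) (alternatingGroup β ⧸ H)
  have hθ : Function.Injective θ := by
    refine (injective_or_eq_one_of_alternatingGroup (by omega) θ).resolve_right fun h ↦ ?_
    have core_eq_top : H.normalCore = ⊤ := by
      rw [Subgroup.normalCore_eq_ker]; exact MonoidHom.ker_eq_top_iff.2 h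
    have H_eq_top : H = ⊤ := top_le_iff.1 (core_eq_top ▸ H.normalCore_le)
    rw [H_eq_top, Subgroup.index_top] at hH
    omega
  obtain ⟨e, he⟩ := exists_eq_permCongr_of_injective hβ hH.symm hθ
  let coset : alternatingGroup β ⧸ H := (1 : alternatingGroup β)
  refine ⟨e.symm coset, fun g hg ↦ ?_⟩
  have fixes_coset : θ g coset = coset := by
    change ((g * 1 : alternatingGroup β) : alternatingGroup β ⧸ H) = _
    rw [mul_one, eq_comm, QuotientGroup.eq]
    simpa using hg
  rw [eq_symm_apply, ← permCongr_apply, ← he, fixes_coset]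

variable {α : Type*} [Fintype α] [DecidableEq α]

lemma index_range_eq_card [Nontrivial α] (hβ : Nat.card β = Nat.card α + 1)
    {φ : alternatingGroup α →* alternatingGroup β} (hφ : Function.Injective φ) :
    φ.range.index = Nat.card β := by
  have : Nontrivial β :=
    Finite.one_lt_card_iff_nontrivial.1 (by have := Nat.card_pos (α := α); omega)
  have card_range := Nat.card_congr (MonoidHom.ofInjective hφ).toEquiv
  refine Nat.eq_of_mul_eq_mul_left (Nat.card_pos (α := Perm α)) ?_
  calc Nat.card (Perm α) * φ.range.index = 2 * Nat.card (alternatingGroup β) := by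
        rw [← two_mul_nat_card_alternatingGroup, card_range, mul_assoc, φ.range.card_mul_index]
    _ = Nat.card (Perm α) * Nat.card β := by
        rw [two_mul_nat_card_alternatingGroup, Nat.card_perm, Nat.card_perm, hβ,
          Nat.factorial_succ, mul_comm]

end PointStabilizer

lemma exists_forall_ofSubtype_eq {G β : Type*} [Group G] [DecidableEq β] {φ : G →* Perm β} {x : β}
    (hx : ∀ g, φ g x = x) : ∃ P : G →* Perm {y // y ≠ x}, ∀ g, ofSubtype (P g) = φ g := by
  have ne_iff (g : G) (y : β) : φ g y ≠ x ↔ y ≠ x := by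
    rw [← (φ g).injective.ne_iff (x := y), hx]
  refine ⟨.mk' (fun g ↦ (φ g).subtypePerm (ne_iff g)) fun g h ↦ ?_, fun g ↦ ?_⟩
  · ext y
    exact DFunLike.congr_fun (map_mul φ g h) (y : β)
  · exact ofSubtype_subtypePerm (ne_iff g) fun y hy hyx ↦ hy (hyx ▸ hx g)

lemma ofSubtype_permCongr {α β : Type*} {p : β → Prop} [DecidablePred p] (e : α ≃ {y // p y})
    (σ : Perm α) : ofSubtype (e.permCongr σ) =
      viaEmbeddingHom (e.toEmbedding.trans (Function.Embedding.subtype p)) σ := by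
  ext y
  by_cases hy : p y
  · obtain ⟨a, ha⟩ := e.surjective ⟨y, hy⟩
    obtain rfl : e a = y := congrArg Subtype.val ha
    rw [ofSubtype_apply_coe]
    simpa [viaEmbeddingHom_apply] using
      (viaEmbedding_apply σ (e.toEmbedding.trans (Function.Embedding.subtype p)) a).symm
  · rw [ofSubtype_apply_of_not_mem _ hy, viaEmbeddingHom_apply, viaEmbedding_apply_of_notMem]
    rintro ⟨a, rfl⟩
    exact hy (e a).2

lemma exists_viaEmbeddingHom_eq_of_injective {α β : Type*} [Fintype α] [DecidableEq α] [Fintype β]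
    [DecidableEq β] (hα : 7 ≤ Nat.card α) (hβ : Nat.card β = Nat.card α + 1)
    {φ : alternatingGroup α →* alternatingGroup β} (hφ : Function.Injective φ) :
    ∃ j : α ↪ β, ∀ σ, (φ σ : Perm β) = viaEmbeddingHom j σ := by
  have : Nontrivial α := Finite.one_lt_card_iff_nontrivial.1 (by omega)
  obtain ⟨x, hx⟩ := exists_forall_apply_eq_self_of_index_eq (by omega) (index_range_eq_card hβ hφ)
  obtain ⟨P, hP⟩ := exists_forall_ofSubtype_eq (φ := (alternatingGroup β).subtype.comp φ) (x := x)
    fun σ ↦ hx _ ⟨σ, rfl⟩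
  have hP_injective : Function.Injective P := fun σ τ h ↦
    hφ (Subtype.ext <| (hP σ).symm.trans <| (congrArg ofSubtype h).trans (hP τ))
  have card_compl : Nat.card α = Nat.card {y // y ≠ x} := by
    rw [Nat.card_eq_fintype_card (α := {y // y ≠ x}), Fintype.card_subtype_compl,
      ← Nat.card_eq_fintype_card, hβ]
    simp
  obtain ⟨e, he⟩ := exists_eq_permCongr_of_injective hα card_compl hP_injective
  exact ⟨_, fun σ ↦ (hP σ).symm.trans <| he σ ▸ ofSubtype_permCongr e σ⟩

lemma exists_comp_alternatingEmbedding_eq {α β : Type*} [Fintype α] [DecidableEq α] [Fintype β]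
    [DecidableEq β] (hα : 7 ≤ Nat.card α) (hβ : Nat.card β = Nat.card α + 1) (ι : α ↪ β)
    (φ : alternatingGroup α →* alternatingGroup β) :
    ∃ ψ : alternatingGroup β →* alternatingGroup β, ψ.comp (alternatingEmbedding ι) = φ := by
  obtain hφ | rfl := injective_or_eq_one_of_alternatingGroup (by omega) φ
  · obtain ⟨j, hj⟩ := exists_viaEmbeddingHom_eq_of_injective hα hβ hφ
    obtain ⟨E, hE⟩ := exists_smul_eq_embedding ι j
    obtain rfl : ι.trans E.toEmbedding = j := hE
    refine ⟨(MulAut.conjNormal E).toMonoidHom, MonoidHom.ext fun σ ↦ Subtype.ext ?_⟩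
    rw [hj, viaEmbeddingHom_trans_perm, ← coe_alternatingEmbedding]
    exact MulAut.conjNormal_apply _ _
  · exact ⟨1, MonoidHom.one_comp _⟩

section Centralizer

variable {α β : Type*} [Fintype α] [DecidableEq α]

lemma exists_mem_alternatingGroup_apply_ne (hα : 4 ≤ Nat.card α) (x y : α) :
    ∃ σ ∈ alternatingGroup α, σ y ≠ y ∧ (x ≠ y → σ x = x) := by
  obtain ⟨u, hu⟩ := exists_notMem_of_card_lt {x, y} (Finset.card_le_two.trans_lt (by omega))
  obtain ⟨v, hv⟩ := exists_notMem_of_card_lt {x, y, u} (Finset.card_le_three.trans_lt hα)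
  simp only [Finset.mem_insert, Finset.mem_singleton, not_or] at hu hv
  refine ⟨swap y u * swap u v, mul_mem_alternatingGroup_of_isSwap ⟨y, u, Ne.symm hu.2, rfl⟩
    ⟨u, v, Ne.symm hv.2.2, rfl⟩, ?_, fun hxy ↦ ?_⟩
  · simp only [Perm.mul_apply, swap_apply_def]
    grind
  · simp only [Perm.mul_apply, swap_apply_def]
    grind

lemma exists_viaEmbeddingHom_apply_ne (hα : 4 ≤ Nat.card α) (ι : α ↪ β) {x y : β} (hxy : x ≠ y)
    (hy : y ∈ Set.range ι) :
    ∃ σ ∈ alternatingGroup α, viaEmbeddingHom ι σ y ≠ y ∧ viaEmbeddingHom ι σ x = x := by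
  obtain ⟨b, rfl⟩ := hy
  by_cases hx : x ∈ Set.range ι
  · obtain ⟨a, rfl⟩ := hx
    obtain ⟨σ, hσ, hσb, hσa⟩ := exists_mem_alternatingGroup_apply_ne hα a b
    refine ⟨σ, hσ, ?_, ?_⟩
    · rw [viaEmbeddingHom_apply, viaEmbedding_apply]
      exact ι.injective.ne hσb
    · rw [viaEmbeddingHom_apply, viaEmbedding_apply, hσa (ne_of_apply_ne ι hxy)]
  · obtain ⟨σ, hσ, hσb, -⟩ := exists_mem_alternatingGroup_apply_ne hα b b
    refine ⟨σ, hσ, ?_, viaEmbedding_apply_of_notMem _ _ _ hx⟩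
    rw [viaEmbeddingHom_apply, viaEmbedding_apply]
    exact ι.injective.ne hσb

lemma eq_one_of_forall_commute_viaEmbeddingHom (hα : 4 ≤ Nat.card α) {ι : α ↪ β}
    (hι : (Set.range ι)ᶜ.Subsingleton) {c : Perm β}
    (hc : ∀ σ ∈ alternatingGroup α, Commute c (viaEmbeddingHom ι σ)) : c = 1 := by
  have commute_apply {σ : Perm α} (hσ : σ ∈ alternatingGroup α) (x : β) :
      c (viaEmbeddingHom ι σ x) = viaEmbeddingHom ι σ (c x) := DFunLike.congr_fun (hc σ hσ) x
  ext x
  rw [Perm.one_apply]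
  by_contra hcx
  by_cases hmem : c x ∈ Set.range ι
  · obtain ⟨σ, hσ, moves, fixes⟩ := exists_viaEmbeddingHom_apply_ne hα ι (Ne.symm hcx) hmem
    exact moves (by rw [← commute_apply hσ, fixes])
  · have hx : x ∈ Set.range ι := by_contra fun hx ↦ hcx (hι hmem hx)
    obtain ⟨σ, hσ, moves, fixes⟩ := exists_viaEmbeddingHom_apply_ne hα ι hcx hx
    exact moves (c.injective (by rw [commute_apply hσ, fixes]))

end Centralizer

section Localization

variable {α β : Type*} [Fintype α] [DecidableEq α] [Fintype β] [DecidableEq β] {ι : α ↪ β}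

lemma eq_of_comp_alternatingEmbedding_eq_of_injective (hα : 4 ≤ Nat.card α) (hβ : 7 ≤ Nat.card β)
    (hι : (Set.range ι)ᶜ.Subsingleton) {ψ₁ ψ₂ : alternatingGroup β →* alternatingGroup β}
    (h₁ : Function.Injective ψ₁) (h₂ : Function.Injective ψ₂)
    (h : ψ₁.comp (alternatingEmbedding ι) = ψ₂.comp (alternatingEmbedding ι)) : ψ₁ = ψ₂ := by
  have exists_conj {ψ : alternatingGroup β →* alternatingGroup β} (hψ : Function.Injective ψ) :
      ∃ e : Perm β, ∀ g, (ψ g : Perm β) = e * g * e⁻¹ := by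
    obtain ⟨e, he⟩ := exists_eq_permCongr_of_injective hβ rfl
      (φ := (alternatingGroup β).subtype.comp ψ) (Subtype.val_injective.comp hψ)
    exact ⟨e, fun g ↦ (he g).trans (permCongr_eq_mul e g)⟩
  obtain ⟨e₁, he₁⟩ := exists_conj h₁
  obtain ⟨e₂, he₂⟩ := exists_conj h₂
  have e₂_inv_mul_e₁ : e₂⁻¹ * e₁ = 1 := by
    refine eq_one_of_forall_commute_viaEmbeddingHom hα hι fun σ hσ ↦ ?_
    have conj_eq : e₁ * viaEmbeddingHom ι σ * e₁⁻¹ = e₂ * viaEmbeddingHom ι σ * e₂⁻¹ := by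
      have hσ' := congrArg Subtype.val (DFunLike.congr_fun h ⟨σ, hσ⟩)
      exact (he₁ _).symm.trans (hσ'.trans (he₂ _))
    rw [mul_inv_eq_iff_eq_mul] at conj_eq
    rw [Commute, SemiconjBy, mul_assoc, conj_eq]
    group
  obtain rfl : e₂ = e₁ := inv_mul_eq_one.1 e₂_inv_mul_e₁
  exact MonoidHom.ext fun g ↦ Subtype.ext ((he₁ g).trans (he₂ g).symm)

lemma comp_alternatingEmbedding_injective (hα : 4 ≤ Nat.card α) (hβ : 7 ≤ Nat.card β)
    (hι : (Set.range ι)ᶜ.Subsingleton) : Function.Injective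
      fun ψ : alternatingGroup β →* alternatingGroup β ↦ ψ.comp (alternatingEmbedding ι) := by
  intro ψ₁ ψ₂ (h : ψ₁.comp _ = ψ₂.comp _)
  have := alternatingGroup.nontrivial_of_three_le_card (α := α) (by omega)
  have hι_injective := alternatingEmbedding_injective ι
  have hβ' : 5 ≤ Nat.card β := by omega
  obtain h₁ | rfl := injective_or_eq_one_of_alternatingGroup hβ' ψ₁
  · obtain h₂ | rfl := injective_or_eq_one_of_alternatingGroup hβ' ψ₂
    · exact eq_of_comp_alternatingEmbedding_eq_of_injective hα hβ hι h₁ h₂ h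
    · exact eq_one_of_comp_eq_one hβ' hι_injective h
  · exact (eq_one_of_comp_eq_one hβ' hι_injective h.symm).symm

end Localization

theorem statement11_general {α β : Type*} [Fintype α] [DecidableEq α] [Fintype β] [DecidableEq β]
    (hα : 7 ≤ Nat.card α) (hβ : Nat.card β = Nat.card α + 1) (ι : α ↪ β) :
    IsLocalizationHom (alternatingEmbedding ι) := by
  have range_compl_subsingleton : (Set.range ι)ᶜ.Subsingleton := by
    rw [← Set.ncard_le_one_iff_subsingleton, Set.ncard_compl, hβ,
      Set.ncard_range_of_injective ι.injective]
    omega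
  exact ⟨comp_alternatingEmbedding_injective (by omega) (by omega) range_compl_subsingleton,
    exists_comp_alternatingEmbedding_eq hα hβ ι⟩

/-- For `n ≥ 7`, the inclusion `A_n ↪ A_{n+1}` (extending an even
permutation of `Fin n` to `Fin (n+1)` by fixing the extra point) is a localization. -/
theorem statement11 (n : ℕ) (hn : 7 ≤ n) :
    (∀ σ : alternatingGroup (Fin n),
      Equiv.Perm.viaEmbeddingHom Fin.castSuccEmb (σ : Equiv.Perm (Fin n)) ∈
        alternatingGroup (Fin (n + 1))) ∧
    (∀ f : alternatingGroup (Fin n) →* alternatingGroup (Fin (n + 1)),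
      (∀ σ : alternatingGroup (Fin n),
        (f σ : Equiv.Perm (Fin (n + 1))) =
          Equiv.Perm.viaEmbeddingHom Fin.castSuccEmb (σ : Equiv.Perm (Fin n))) →
      IsLocalizationHom f) := by
  refine ⟨fun σ ↦ (alternatingEmbedding Fin.castSuccEmb σ).2, fun f hf ↦ ?_⟩
  obtain rfl : f = alternatingEmbedding Fin.castSuccEmb :=
    MonoidHom.ext fun σ ↦ Subtype.ext (hf σ)
  exact statement11_general (by simpa using hn) (by simp) _
end

section
/- Let G₁ and G₂ be finite groups of coprime orders. Then the first projection π : G₁ × G₂ → G₁ is a localization; that is, the precomposition map Hom(G₁, G₁) → Hom(G₁ × G₂, G₁), ψ ↦ ψ ∘ π, is a bijection. -/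
theorem subsingleton_monoidHom_of_coprime_orderOf {M N : Type*} [Monoid M] [Monoid N]
    (hco : ∀ (x : M) (y : N), (orderOf x).Coprime (orderOf y)) : Subsingleton (N →* M) := by
  have apply_eq_one (g : N →* M) (y : N) : g y = 1 :=
    orderOf_eq_one_iff.mp ((hco (g y) y).eq_one_of_dvd (orderOf_map_dvd g y))
  exact ⟨fun g g' => MonoidHom.ext fun y => by rw [apply_eq_one, apply_eq_one]⟩

section Prod

variable {M N P : Type*} [MulOneClass M] [MulOneClass N] [MulOneClass P]

theorem comp_inl_comp_fst_eq_self {f : M × N →* P} (hf : f.comp (.inr M N) = 1) :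
    (f.comp (.inl M N)).comp (.fst M N) = f := by
  ext ⟨x, y⟩
  have map_inr : f (1, y) = 1 := DFunLike.congr_fun hf y
  calc f (x, 1) = f (x, 1) * f (1, y) := by rw [map_inr, mul_one]
    _ = f (x, y) := by rw [← map_mul, Prod.mk_mul_mk, mul_one, one_mul]

theorem bijective_comp_fst_iff_subsingleton :
    Function.Bijective (fun ψ : M →* P => ψ.comp (.fst M N)) ↔ Subsingleton (N →* P) := by
  constructor
  · rintro ⟨-, comp_fst_surjective⟩
    have eq_one (g : N →* P) : g = 1 := by
      obtain ⟨ψ, hψ⟩ := comp_fst_surjective (g.comp (.snd M N))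
      ext y
      simpa using (DFunLike.congr_fun hψ (1, y)).symm
    exact ⟨fun g g' => (eq_one g).trans (eq_one g').symm⟩
  · intro
    exact ⟨fun _ _ => (MonoidHom.cancel_right Prod.fst_surjective).mp,
      fun f => ⟨f.comp (.inl M N), comp_inl_comp_fst_eq_self (Subsingleton.elim _ _)⟩⟩

end Prod

theorem statement14_general {G₁ G₂ : Type*} [Group G₁] [Group G₂]
    (hco : ∀ (x : G₁) (y : G₂), (orderOf x).Coprime (orderOf y)) :
    IsLocalizationHom (MonoidHom.fst G₁ G₂) :=
  bijective_comp_fst_iff_subsingleton.mpr (subsingleton_monoidHom_of_coprime_orderOf hco)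

/-- If `G₁` and `G₂` are finite groups of coprime orders, then the
first projection `G₁ × G₂ → G₁` is a localization. -/
theorem statement14 (G₁ G₂ : Type*) [Group G₁] [Group G₂] [Finite G₁] [Finite G₂]
    (hco : Nat.Coprime (Nat.card G₁) (Nat.card G₂)) :
    IsLocalizationHom (MonoidHom.fst G₁ G₂) := by
  exact statement14_general fun x y =>
    hco.of_dvd (orderOf_dvd_natCard x) (orderOf_dvd_natCard y)
end

section
/- Let G be a finite simple group and H a nontrivial subgroup of G such that the inclusion H ↪ G is a localization. Then for every subgroup H' of G isomorphic (as a group) to H, the inclusion H' ↪ G is also a localization. -/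
/-!
Being a localization is invariant under isomorphisms of the source and of the target. A second
homomorphism `ψ : H →* G` factors through the localization `φ` as `ψ = α ∘ φ` for an endomorphism
`α` of `G`. If `ψ` is nontrivial then so is `α`, hence `α` is injective as `G` is simple, and thus
an automorphism as soon as injective endomorphisms of `G` are surjective. So `ψ` is `φ` up to an
automorphism of `G`.
-/

section Transport

variable {H K G G' : Type*} [Group H] [Group K] [Group G] [Group G'] {φ : H →* G}

theorem IsLocalizationHom.comp_mulEquiv (hφ : IsLocalizationHom φ) (e : K ≃* H) :
    IsLocalizationHom (φ.comp e.toMonoidHom) :=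
  e.symm.monoidHomCongrLeftEquiv.bijective.comp hφ

theorem IsLocalizationHom.mulEquiv_comp (hφ : IsLocalizationHom φ) (α : G ≃* G') :
    IsLocalizationHom (α.toMonoidHom.comp φ) := by
  let conj : (G' →* G') ≃ (G →* G) :=
    α.symm.monoidHomCongrLeftEquiv.trans α.symm.monoidHomCongrRightEquiv
  rw [IsLocalizationHom]
  convert (α.monoidHomCongrRightEquiv.bijective.comp hφ).comp conj.bijective using 1
  ext ψ x
  simp [conj]

end Transport

theorem monoidHom_injective_of_ne_one {G M : Type*} [Group G] [IsSimpleGroup G] [MulOneClass M]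
    {f : G →* M} (hf : f ≠ 1) : Function.Injective f :=
  f.ker_eq_bot_iff.mp <| f.normal_ker.eq_bot_or_eq_top.resolve_right <|
    mt MonoidHom.ker_eq_top_iff.mp hf

theorem subgroup_subtype_ne_one {G : Type*} [Group G] (H : Subgroup G) [Nontrivial H] :
    H.subtype ≠ 1 := by
  rw [Ne, ← MonoidHom.range_eq_bot_iff, H.range_subtype]
  exact H.nontrivial_iff_ne_bot.mp ‹_›

theorem statement15_general {G H : Type*} [Group G] [IsSimpleGroup G] [Group H]
    (coHopfian : ∀ α : G →* G, Function.Injective α → Function.Surjective α)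
    {φ ψ : H →* G} (hφ : IsLocalizationHom φ) (hψ : ψ ≠ 1) : IsLocalizationHom ψ := by
  obtain ⟨α, rfl : α.comp φ = ψ⟩ := hφ.surjective ψ
  have α_ne_one : α ≠ 1 := by
    rintro rfl
    exact hψ (MonoidHom.one_comp φ)
  have α_injective := monoidHom_injective_of_ne_one α_ne_one
  exact hφ.mulEquiv_comp (MulEquiv.ofBijective α ⟨α_injective, coHopfian α α_injective⟩)

/-- If `G` is a finite simple group and the inclusion of a nontrivial
subgroup `H` is a localization, then for every subgroup `H'` of `G` isomorphic to `H`,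
the inclusion `H' ↪ G` is also a localization. -/
theorem statement15 (G : Type*) [Group G] [Finite G] [IsSimpleGroup G]
    (H : Subgroup G) (hH : H ≠ ⊥)
    (hloc : IsLocalizationHom H.subtype) :
    ∀ H' : Subgroup G, Nonempty (H' ≃* H) → IsLocalizationHom H'.subtype := by
  rintro H' ⟨e⟩
  have : Nontrivial H := H.nontrivial_iff_ne_bot.mpr hH
  have : Nontrivial H' := e.toEquiv.nontrivial
  exact statement15_general (fun _ => Finite.surjective_of_injective)
    (hloc.comp_mulEquiv e) (subgroup_subtype_ne_one H')
end
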